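/- arXiv:2512.18825 — 2 statements merged into one kernel-verified Lean document; each statement's English description precedes it below -/
import Mathlib

section
/- Let K be a number field, let f : P^1 → P^1 be a rational map of degree d ≥ 2 defined over K, let α ∈ P^1(K), and let m ≥ 2. Writing C_D = log(D!)/(D−1), it holds that dim_upper(G_{f^m,α}) ≤ (C_d/C_{d^m})·dim_upper(G_{f,α}). Moreover, if the Minkowski dimension dim(G_{f,α}) exists, then dim(G_{f^m,α}) exists and dim(G_{f^m,α}) = (C_d/C_{d^m})·dim(G_{f,α}). -/
/-!
For the tree metric, the closed ball of radius `ε_n` around `σ` is the set of automorphisms agreeing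
with `σ` on the height-`n` subtree, so the covering number at scale `ε_n` is the order `|r_n(G)|` of
the restriction of `G` to that subtree (`coverNum_eq_levelCard`).

A rational map of positive degree is surjective on `ℙ¹(K̄)`, so a vertex of the height-`n` subtree is
an ancestor of some vertex of level `n`; as Galois commutes with the map, the action on the subtree
is determined by the action on level `n`. Level `n` of the tree of `f^m` is level `mn` of the tree
of `f`, hence `|r_n(G_{f^m})| = |r_{mn}(G_f)|` (`levelCard_iterate`). Since
`log (1/ε_n) = (dⁿ - 1) C_d`, the quotient sequence of `f^m` at `n` is `C_d / C_{d^m}` times that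
of `f` at `mn`.

A limsup along a subsequence is at most the full limsup, and a limit passes to subsequences. For
real-valued limsup and liminf this needs the quotients to be bounded: fibres of a degree-`d` map
have at most `d` points, which gives `|r_n(G_f)| ≤ d ^ (1 + d + ⋯ + dⁿ)` (`levelCard_le`), of the
same order as `1/ε_n` on a logarithmic scale (`log_div_le`).
-/

open scoped Classical

noncomputable section

/-! ### Minkowski dimension machinery for groups of automorphisms of rooted trees

A rooted tree is presented by its levels `V 0, V 1, V 2, …` (with `V 0` the root level)
together with parent maps `V (n+1) → V n`.  An automorphism is a family of permutations
of the levels commuting with the parent maps; it is in particular determined by a point of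
`∀ k, Equiv.Perm (V k)`.  The restriction `r_n σ` of `σ` to the height-`n` subtree is the
tuple `(σ 0, …, σ n)`, and the natural metric is
`d(σ,τ) = inf { d!^{-(dⁿ-1)/(d-1)} : r_n σ = r_n τ }`. -/

/-- The exponent `(dⁿ - 1)/(d - 1) = 1 + d + ⋯ + d^(n-1)`. -/
def scaleExp (d n : ℕ) : ℕ := ∑ i ∈ Finset.range n, d ^ i

/-- The scale `ε_n = d!^{-(dⁿ-1)/(d-1)}`, i.e. `1/|Aut(Tₙᶜᵒᵐ)|`. -/
def treeScale (d n : ℕ) : ℝ := ((d.factorial : ℝ) ^ scaleExp d n)⁻¹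

/-- Two families of level permutations restrict to the same automorphism of the
height-`n` subtree. -/
def AgreeUpTo {V : ℕ → Type*} (n : ℕ) (σ τ : ∀ k, Equiv.Perm (V k)) : Prop :=
  ∀ k, k ≤ n → σ k = τ k

/-- The natural metric on automorphisms of a rooted `d`-ary tree:
`d(σ,τ) = inf { d!^{-(dⁿ-1)/(d-1)} : σ and τ agree on the height-n subtree }`. -/
def treeDist {V : ℕ → Type*} (d : ℕ) (σ τ : ∀ k, Equiv.Perm (V k)) : ℝ :=
  sInf {x : ℝ | ∃ n : ℕ, AgreeUpTo n σ τ ∧ x = treeScale d n}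

/-- `N_{ε_n}(G)`: the least number of balls of radius `ε_n = treeScale d n` needed to
cover `G`. -/
def coverNum {V : ℕ → Type*} (d : ℕ) (G : Set (∀ k, Equiv.Perm (V k))) (n : ℕ) : ℕ :=
  sInf {m : ℕ | ∃ s : Finset (∀ k, Equiv.Perm (V k)), s.card = m ∧
    G ⊆ ⋃ σ ∈ s, {τ | treeDist d σ τ ≤ treeScale d n}}

/-- The lower Minkowski dimension `liminf_{ε → 0} log N_ε(G) / log (1/ε)` (computed
along the scales `ε_n` of the metric). -/
def dimLower {V : ℕ → Type*} (d : ℕ) (G : Set (∀ k, Equiv.Perm (V k))) : ℝ :=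
  Filter.liminf
    (fun n : ℕ => Real.log (coverNum d G n : ℝ) / Real.log (1 / treeScale d n)) Filter.atTop

/-- The upper Minkowski dimension `limsup_{ε → 0} log N_ε(G) / log (1/ε)` (computed
along the scales `ε_n` of the metric). -/
def dimUpper {V : ℕ → Type*} (d : ℕ) (G : Set (∀ k, Equiv.Perm (V k))) : ℝ :=
  Filter.limsup
    (fun n : ℕ => Real.log (coverNum d G n : ℝ) / Real.log (1 / treeScale d n)) Filter.atTop

/-- The Minkowski dimension of `G` exists and equals `x`. -/
def HasDim {V : ℕ → Type*} (d : ℕ) (G : Set (∀ k, Equiv.Perm (V k))) (x : ℝ) : Prop :=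
  dimLower d G = x ∧ dimUpper d G = x

/-- `G` is closed for the natural metric. -/
def IsDistClosed {V : ℕ → Type*} (d : ℕ) (G : Set (∀ k, Equiv.Perm (V k))) : Prop :=
  ∀ σ, (∀ ε : ℝ, 0 < ε → ∃ τ ∈ G, treeDist d σ τ ≤ ε) → σ ∈ G

/-- The closure of `G` for the natural metric. -/
def distClosure {V : ℕ → Type*} (d : ℕ) (G : Set (∀ k, Equiv.Perm (V k))) :
    Set (∀ k, Equiv.Perm (V k)) :=
  {σ | ∀ ε : ℝ, 0 < ε → ∃ τ ∈ G, treeDist d σ τ ≤ ε}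

/-- `|r_n(G)|`: the cardinality of the restriction of `G` to the height-`n` subtree. -/
def levelCard {V : ℕ → Type*} (G : Set (∀ k, Equiv.Perm (V k))) (n : ℕ) : ℕ :=
  Nat.card ((fun (σ : ∀ k, Equiv.Perm (V k)) (k : Fin (n + 1)) => σ k.1) '' G)

end
noncomputable section

/-- A fixed algebraic closure `K̄` of `K`. -/
abbrev Kbar (K : Type*) [Field K] : Type _ := AlgebraicClosure K

/-- The level-`n` vertices of the preimage tree of `α` under `φ`: the set
`φ^{-n}(α)`. -/
abbrev preV {Pts : Type*} (φ : Pts → Pts) (α : Pts) (n : ℕ) : Type _ :=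
  {β : Pts // φ^[n] β = α}

/-- The parent map of the preimage tree: a vertex `β ∈ φ^{-(n+1)}(α)` is joined to
`φ(β) ∈ φ^{-n}(α)`. -/
def preParent {Pts : Type*} (φ : Pts → Pts) (α : Pts) (n : ℕ)
    (β : preV φ α (n + 1)) : preV φ α n :=
  ⟨φ β.1, by have h := β.2; rwa [Function.iterate_succ_apply] at h⟩

/-- The image `G_{φ,α}` of the arboreal Galois representation attached to `(φ, α)` over
the base field `L` (an intermediate field of `K̄/K`): the set of families of level
permutations of the preimage tree induced by elements of `Gal(K̄/L)`, acting on points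
via `act`. -/
def arbGal {K : Type*} [Field K] {Pts : Type*}
    (act : (Kbar K ≃ₐ[K] Kbar K) → Pts → Pts) (L : IntermediateField K (Kbar K))
    (φ : Pts → Pts) (α : Pts) : Set (∀ n, Equiv.Perm (preV φ α n)) :=
  {g | ∃ σ : Kbar K ≃ₐ[K] Kbar K, (∀ x ∈ L, σ x = x) ∧
    ∀ (n : ℕ) (β : preV φ α n), (g n β : Pts) = act σ (β : Pts)}

end
noncomputable section

/-- The projective line `ℙ¹(L) = L ∪ {∞}`, with `none` the point at infinity. -/
abbrev P1 (L : Type*) := Option L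

/-- The action on `ℙ¹(A)` of the rational map `f = p/q` with coefficients in `K`,
for an extension field `A` of `K`.  At a finite point `x` the value is `p(x)/q(x)`
(`∞` when `q(x) = 0`), and the value at `∞` is governed by the degrees of `p` and
`q` and their leading coefficients. -/
def ratAct {K : Type*} [Field K] (p q : Polynomial K)
    (A : Type*) [Field A] [Algebra K A] : P1 A → P1 A
  | some x =>
      if Polynomial.aeval x q = 0 then none
      else some (Polynomial.aeval x p / Polynomial.aeval x q)
  | none =>
      if q.natDegree < p.natDegree then none
      else if p.natDegree < q.natDegree then some 0
      else some (algebraMap K A (p.leadingCoeff / q.leadingCoeff))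

/-- The natural action of `Gal(K̄/K)` on `ℙ¹(K̄)`. -/
def galP1 {K : Type*} [Field K] (σ : Kbar K ≃ₐ[K] Kbar K) : P1 (Kbar K) → P1 (Kbar K) :=
  Option.map σ

/-- The inclusion `ℙ¹(K) ⊆ ℙ¹(K̄)`. -/
def P1K {K : Type*} [Field K] : P1 K → P1 (Kbar K) :=
  Option.map (algebraMap K (Kbar K))

/-- The set of `L`-rational points of `ℙ¹(K̄)`, for an intermediate field `L` of
`K̄/K`. -/
def P1Rat {K : Type*} [Field K] (L : IntermediateField K (Kbar K)) : Set (P1 (Kbar K)) :=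
  {β | β = none ∨ ∃ x ∈ L, β = some x}

/-- The Möbius transformation of `ℙ¹(F)` attached to `(a b; c e) ∈ PGL₂(F)`. -/
def moebius {F : Type*} [Field F] (a b c e : F) : P1 F → P1 F
  | some x => if c * x + e = 0 then none else some ((a * x + b) / (c * x + e))
  | none => if c = 0 then none else some (a / c)

/-- The normalizing constant `C_D = log(D!)/(D-1)`. -/
def Cconst (D : ℕ) : ℝ := Real.log (D.factorial : ℝ) / ((D : ℝ) - 1)

/-- The ramification multiplicity at a point `γ ∈ ℙ¹(A)` of the degree-`d` rational
map `f = p/q` with coefficients in `K ⊆ A`:  at a finite point `γ` with `f(γ) = c`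
finite it is the order of vanishing of `p - c·q` at `γ`; the cases involving `∞` are
handled using `q` and degrees.  A point is critical when this is at least `2`. -/
def multAt {K : Type*} [Field K] (p q : Polynomial K)
    (A : Type*) [Field A] [Algebra K A] (d : ℕ) : P1 A → ℕ
  | some x =>
      match ratAct p q A (some x) with
      | some c => ((p.map (algebraMap K A)) -
          Polynomial.C c * (q.map (algebraMap K A))).rootMultiplicity x
      | none => (q.map (algebraMap K A)).rootMultiplicity x
  | none =>
      match ratAct p q A none with
      | some c => d - ((p.map (algebraMap K A)) -
          Polynomial.C c * (q.map (algebraMap K A))).natDegree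
      | none => d - q.natDegree

end
/-! ### Scales and covering numbers -/

theorem scaleExp_strictMono {d : ℕ} (hd : 2 ≤ d) : StrictMono (scaleExp d) := by
  refine strictMono_nat_of_lt_succ fun n => ?_
  have : 0 < d ^ n := by positivity
  simp only [scaleExp, Finset.sum_range_succ]
  omega

theorem two_le_factorial {d : ℕ} (hd : 2 ≤ d) : 2 ≤ d.factorial :=
  hd.trans (Nat.self_le_factorial d)

theorem treeScale_strictAnti {d : ℕ} (hd : 2 ≤ d) : StrictAnti (treeScale d) := by
  intro a b hab
  have h2 : (1 : ℝ) < d.factorial := by exact_mod_cast two_le_factorial hd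
  exact inv_strictAnti₀ (by positivity) (pow_lt_pow_right₀ h2 (scaleExp_strictMono hd hab))

theorem log_inv_treeScale (d n : ℕ) :
    Real.log (1 / treeScale d n) = scaleExp d n * Real.log d.factorial := by
  simp [treeScale]

theorem scaleExp_mul {d : ℕ} (n : ℕ) : (scaleExp d n : ℝ) * ((d : ℝ) - 1) = (d : ℝ) ^ n - 1 := by
  simp only [scaleExp]
  push_cast
  exact geom_sum_mul _ _

theorem Cconst_pos {d : ℕ} (hd : 2 ≤ d) : 0 < Cconst d := by
  have h2 : (1 : ℝ) < d.factorial := by exact_mod_cast two_le_factorial hd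
  have hd' : (2 : ℝ) ≤ d := by exact_mod_cast hd
  exact div_pos (Real.log_pos h2) (by linarith)

theorem log_inv_treeScale_eq {d : ℕ} (hd : 2 ≤ d) (n : ℕ) :
    Real.log (1 / treeScale d n) = ((d : ℝ) ^ n - 1) * Cconst d := by
  have hd' : (2 : ℝ) ≤ d := by exact_mod_cast hd
  have : (d : ℝ) - 1 ≠ 0 := by linarith
  rw [log_inv_treeScale, ← scaleExp_mul, Cconst]
  field_simp

/-- The closed ball of radius `ε_n` is an agreement class at height `n`. The infimum in `treeDist`
ranges over a nonempty set because the root level has only one permutation. -/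
theorem treeDist_le_iff {V : ℕ → Type*} [Subsingleton (V 0)] {d : ℕ} (hd : 2 ≤ d) (n : ℕ)
    (σ τ : ∀ k, Equiv.Perm (V k)) :
    treeDist d σ τ ≤ treeScale d n ↔ AgreeUpTo n σ τ := by
  have hpos : ∀ k, 0 ≤ treeScale d k := fun k => by unfold treeScale; positivity
  constructor
  · intro h
    by_contra hn
    -- Disagreement at height `n` forces every agreement height to be at most `n - 1`.
    have key : ∀ k, AgreeUpTo k σ τ → k < n := fun k hk => by
      by_contra! hle
      exact hn fun j hj => hk j (hj.trans hle)
    have h0 : AgreeUpTo 0 σ τ := fun k hk => by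
      obtain rfl : k = 0 := by omega
      exact Subsingleton.elim _ _
    have hn0 := key 0 h0
    have : treeScale d (n - 1) ≤ treeDist d σ τ := by
      refine le_csInf ⟨_, 0, h0, rfl⟩ ?_
      rintro x ⟨k, hk, rfl⟩
      exact (treeScale_strictAnti hd).antitone (by have := key k hk; omega)
    have h3 := treeScale_strictAnti hd (show n - 1 < n by omega)
    linarith
  · intro h
    refine csInf_le ⟨0, ?_⟩ ⟨n, h, rfl⟩
    rintro x ⟨k, -, rfl⟩
    exact hpos k

/-- Choosing one element of `G` in each agreement class gives a cover by `|r_n(G)|` balls, and every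
cover needs one ball for each class. -/
theorem coverNum_eq_levelCard {V : ℕ → Type*} [Subsingleton (V 0)] [∀ k, Finite (V k)]
    {d : ℕ} (hd : 2 ≤ d) (G : Set (∀ k, Equiv.Perm (V k))) (n : ℕ) :
    coverNum d G n = levelCard G n := by
  let r : (∀ k, Equiv.Perm (V k)) → ∀ k : Fin (n + 1), Equiv.Perm (V k) := fun σ k => σ k.1
  have hr : ∀ σ τ, treeDist d σ τ ≤ treeScale d n ↔ r σ = r τ := fun σ τ => by
    rw [treeDist_le_iff hd]
    exact ⟨fun h => funext fun k => h k.1 (by omega),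
      fun h k hk => congrFun h ⟨k, by omega⟩⟩
  have hcard : levelCard G n = (r '' G).ncard := rfl
  have hfin : (r '' G).Finite := Set.toFinite _
  rw [hcard]
  refine le_antisymm (Nat.sInf_le ?_) (le_csInf ?_ ?_)
  · obtain ⟨s, hs, hinj⟩ := Set.SurjOn.exists_bijOn_subset (Set.surjOn_image r G)
    have hsf : s.Finite := hinj.finite_iff_finite.2 hfin
    refine ⟨hsf.toFinset, ?_, ?_⟩
    · rw [← Set.ncard_eq_toFinset_card s hsf, ← hinj.image_eq, hinj.injOn.ncard_image]
    · intro τ hτ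
      obtain ⟨σ, hσ, h⟩ := hinj.surjOn ⟨τ, hτ, rfl⟩
      simp only [Set.mem_iUnion]
      exact ⟨σ, by simpa using hσ, (hr _ _).2 h⟩
  · obtain ⟨s, hs, hinj⟩ := Set.SurjOn.exists_bijOn_subset (Set.surjOn_image r G)
    have hsf : s.Finite := hinj.finite_iff_finite.2 hfin
    refine ⟨_, hsf.toFinset, rfl, fun τ hτ => ?_⟩
    obtain ⟨σ, hσ, h⟩ := hinj.surjOn ⟨τ, hτ, rfl⟩
    simp only [Set.mem_iUnion]
    exact ⟨σ, by simpa using hσ, (hr _ _).2 h⟩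
  · rintro _ ⟨s, rfl, hs⟩
    have hsub : r '' G ⊆ (s.image r : Finset _) := by
      rintro _ ⟨τ, hτ, rfl⟩
      obtain ⟨σ, hσ, h⟩ := Set.mem_iUnion₂.1 (hs hτ)
      simpa using ⟨σ, hσ, (hr _ _).1 h⟩
    calc (r '' G).ncard ≤ ((s.image r : Finset _) : Set _).ncard :=
          Set.ncard_le_ncard hsub (Finset.finite_toSet _)
      _ ≤ s.card := by rw [Set.ncard_coe_finset]; exact Finset.card_image_le

/-! ### Preimage trees of an equivariant surjection -/

theorem mem_fiber_of_equivariant {Γ Pts : Type*} {act : Γ → Pts → Pts} {φ : Pts → Pts} {α : Pts}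
    (hφ : ∀ g x, act g (φ x) = φ (act g x)) (hα : ∀ g, act g α = α) (g : Γ) (n : ℕ) {β : Pts}
    (hβ : φ^[n] β = α) : φ^[n] (act g β) = α := by
  have h : Function.Semiconj (act g) φ φ := hφ g
  rw [← (h.iterate_right n).eq, hβ, hα]

/-- The image of Galois on the height-`n` subtree is already determined by its action on the
points of level `n`, since every vertex of the subtree lies below one of level `n`. -/
theorem levelCard_arbGal {K : Type*} [Field K] {Pts : Type*}
    {act : (Kbar K ≃ₐ[K] Kbar K) → Pts → Pts} {φ : Pts → Pts} {α : Pts}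
    (hsurj : Function.Surjective φ)
    (hφ : ∀ g x, act g (φ x) = φ (act g x)) (hα : ∀ g, act g α = α)
    (hinv : ∀ g x, act g⁻¹ (act g x) = x) (n : ℕ) :
    levelCard (arbGal act ⊥ φ α) n =
      Nat.card (Set.range fun g (β : {β | φ^[n] β = α}) => act g β) := by
  have hinv' : ∀ g x, act g (act g⁻¹ x) = x := fun g x => by
    simpa using hinv g⁻¹ x
  let P : (Kbar K ≃ₐ[K] Kbar K) → ∀ k, Equiv.Perm (preV φ α k) := fun g k =>
    { toFun := fun β => ⟨act g β, mem_fiber_of_equivariant hφ hα g k β.2⟩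
      invFun := fun β => ⟨act g⁻¹ β, mem_fiber_of_equivariant hφ hα g⁻¹ k β.2⟩
      left_inv := fun β => Subtype.ext (hinv g β)
      right_inv := fun β => Subtype.ext (hinv' g β) }
  have hG : arbGal act ⊥ φ α = Set.range P := by
    ext σ
    constructor
    · rintro ⟨g, -, h⟩
      refine ⟨g, ?_⟩
      funext k
      ext β
      exact (h k β).symm
    · rintro ⟨g, rfl⟩
      refine ⟨g, fun x hx => ?_, fun k β => rfl⟩
      obtain ⟨y, rfl⟩ := IntermediateField.mem_bot.1 hx
      exact g.commutes y
  unfold levelCard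
  rw [hG, ← Set.range_comp]
  refine Nat.card_congr <| (Setoid.quotientKerEquivRange _).symm.trans <|
    (Quotient.congr (Equiv.refl _) fun g h => ?_).trans (Setoid.quotientKerEquivRange _)
  simp only [Setoid.ker_def, Equiv.refl_apply]
  constructor
  · intro hgh
    funext β
    exact congrArg Subtype.val (Equiv.congr_fun (congrFun hgh (Fin.last n)) β)
  · intro hgh
    funext k
    ext β
    -- Lift `β` from level `k` to level `n` and push the equality back down.
    obtain ⟨γ, hγ⟩ := hsurj.iterate (n - k) β.1
    have hk : k.1 + (n - k) = n := by omega
    have hγn : φ^[n] γ = α := by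
      rw [← hk, Function.iterate_add_apply, hγ]
      exact β.2
    have h1 : act g γ = act h γ := congrFun hgh ⟨γ, hγn⟩
    have hit : ∀ e, act e (φ^[n - k] γ) = φ^[n - k] (act e γ) := fun e =>
      (Function.Semiconj.iterate_right (hφ e) (n - k)).eq γ
    change act g β.1 = act h β.1
    rw [← hγ, hit, hit, h1]

/-- Passing from `φ` to `φ^m` selects every `m`-th level of the tree. -/
theorem levelCard_iterate {K : Type*} [Field K] {Pts : Type*}
    {act : (Kbar K ≃ₐ[K] Kbar K) → Pts → Pts} {φ : Pts → Pts} {α : Pts}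
    (hsurj : Function.Surjective φ)
    (hφ : ∀ g x, act g (φ x) = φ (act g x)) (hα : ∀ g, act g α = α)
    (hinv : ∀ g x, act g⁻¹ (act g x) = x) (m n : ℕ) :
    levelCard (arbGal act ⊥ φ^[m] α) n = levelCard (arbGal act ⊥ φ α) (m * n) := by
  rw [levelCard_arbGal hsurj hφ hα hinv, levelCard_arbGal (hsurj.iterate m)
    (fun g => (Function.Semiconj.iterate_right (hφ g) m).eq) hα hinv, Function.iterate_mul]

/-- A vertex of level `n` is recovered from the labels along its path to the root. -/
theorem preV_label_injective {Pts : Type*} {φ : Pts → Pts} {d : ℕ} {lab : Pts → Fin d}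
    (hlab : ∀ x y, φ x = φ y → lab x = lab y → x = y) (α : Pts) (n : ℕ) :
    Function.Injective fun (β : preV φ α n) (k : Fin n) => lab (φ^[k] β) := by
  suffices H : ∀ n x y, φ^[n] x = φ^[n] y → (∀ k < n, lab (φ^[k] x) = lab (φ^[k] y)) → x = y by
    intro x y h
    exact Subtype.ext (H n x y (x.2.trans y.2.symm) fun k hk => congrFun h ⟨k, hk⟩)
  intro n
  induction n with
  | zero => intro x y h _; exact h
  | succ n ih =>
    intro x y h hl
    refine hlab x y (ih _ _ h fun k hk => ?_) (hl 0 (by omega))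
    simpa only [Function.iterate_succ_apply] using hl (k + 1) (by omega)

/-- Labelling the children of every vertex by `Fin d` bounds the image of Galois on the height-`n`
subtree: an automorphism is recovered from the labels of the images of all vertices. -/
theorem levelCard_le {K : Type*} [Field K] {Pts : Type*}
    {act : (Kbar K ≃ₐ[K] Kbar K) → Pts → Pts} {φ : Pts → Pts} {α : Pts}
    (hφ : ∀ g x, act g (φ x) = φ (act g x))
    {d : ℕ} (hd : 2 ≤ d) {lab : Pts → Fin d}
    (hlab : ∀ x y, φ x = φ y → lab x = lab y → x = y) (n : ℕ) :
    levelCard (arbGal act ⊥ φ α) n ≤ d ^ scaleExp d (n + 1) := by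
  have hfin : ∀ k, Finite (preV φ α k) := fun k =>
    Finite.of_injective _ (preV_label_injective hlab α k)
  have hcard : ∀ k, Nat.card (preV φ α k) ≤ d ^ k := fun k => by
    simpa using Nat.card_le_card_of_injective _ (preV_label_injective hlab α k)
  let r : (∀ k, Equiv.Perm (preV φ α k)) → ∀ k : Fin (n + 1), Equiv.Perm (preV φ α k) :=
    fun σ k => σ k.1
  let F : (r '' arbGal act ⊥ φ α) → ∀ k : Fin (n + 1), preV φ α k → Fin d :=
    fun t k β => lab (t.1 k β)
  have hF : Function.Injective F := by
    rintro ⟨_, σ, ⟨g, -, hg⟩, rfl⟩ ⟨_, τ, ⟨h, -, hh⟩, rfl⟩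
    intro hst
    have key : ∀ k ≤ n, ∀ β : preV φ α k, act g β = act h β := by
      intro k
      induction k with
      | zero =>
        intro _ β
        have h1 : (σ 0 β : Pts) = α := (σ 0 β).2
        have h2 : (τ 0 β : Pts) = α := (τ 0 β).2
        rw [← hg, ← hh, h1, h2]
      | succ k ih =>
        intro hk β
        refine hlab _ _ ?_ ?_
        · rw [← hφ, ← hφ]
          exact ih (by omega) (preParent φ α k β)
        · rw [← hg, ← hh]
          exact congrFun (congrFun hst ⟨k + 1, by omega⟩) β
    refine Subtype.ext (funext fun k => Equiv.ext fun β => Subtype.ext ?_)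
    change (σ k β : Pts) = τ k β
    rw [hg, hh]
    exact key k (by omega) β
  have := Nat.card_le_card_of_injective F hF
  refine this.trans ?_
  rw [Nat.card_pi]
  have hc : ∀ k : Fin (n + 1), Nat.card (preV φ α k → Fin d) ≤ d ^ (d ^ k.1) := fun k => by
    rw [Nat.card_fun, Nat.card_fin]
    exact Nat.pow_le_pow_right (by omega) (hcard k)
  refine (Finset.prod_le_prod' fun k _ => hc k).trans ?_
  rw [Finset.prod_pow_eq_pow_sum, Fin.sum_univ_eq_sum_range (fun k => d ^ k)]
  rfl

/-! ### Rational maps on the projective line -/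

section RatAct

open Polynomial

variable {K : Type*} [Field K] {p q : K[X]}

theorem galP1_ratAct (g : Kbar K ≃ₐ[K] Kbar K) (x : P1 (Kbar K)) :
    galP1 g (ratAct p q (Kbar K) x) = ratAct p q (Kbar K) (galP1 g x) := by
  have h : ∀ (r : K[X]) (x : Kbar K), aeval (g x) r = g (aeval x r) := fun r x =>
    aeval_algHom_apply g x r
  cases x with
  | none =>
    simp only [ratAct, galP1, Option.map_none]
    split_ifs <;> simp
  | some x =>
    simp only [ratAct, galP1, Option.map_some, h]
    by_cases hx : aeval x q = 0 <;> simp [hx]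

/-- The polynomial `p - c q` over `K̄`, whose roots are the finite points of the fibre of `p / q`
over the finite point `c`. -/
noncomputable def fiberPoly (p q : K[X]) (c : Kbar K) : (Kbar K)[X] :=
  p.map (algebraMap K (Kbar K)) - C c * q.map (algebraMap K (Kbar K))

theorem eval_fiberPoly (c x : Kbar K) :
    (fiberPoly p q c).eval x = aeval x p - c * aeval x q := by
  simp [fiberPoly, aeval_def, eval_map]

theorem no_common_root (hf : IsCoprime p q) (x : Kbar K) (hq : aeval x q = 0) :
    aeval x p ≠ 0 := by
  intro hp
  obtain ⟨a, b, hab⟩ := hf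
  have := congrArg (aeval x) hab
  simp [hp, hq] at this

theorem ratAct_some_eq_some_iff (hf : IsCoprime p q) (x c : Kbar K) :
    ratAct p q (Kbar K) (some x) = some c ↔ (fiberPoly p q c).eval x = 0 := by
  rw [eval_fiberPoly, ratAct]
  split_ifs with h
  · simpa [h] using no_common_root hf x h
  · rw [Option.some_inj, div_eq_iff h, sub_eq_zero]

theorem natDegree_fiberPoly_le (c : Kbar K) :
    (fiberPoly p q c).natDegree ≤ max p.natDegree q.natDegree := by
  refine (natDegree_sub_le _ _).trans (max_le_max ?_ ?_)
  · exact natDegree_map_le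
  · exact (natDegree_C_mul_le _ _).trans natDegree_map_le

/-- The point at infinity lies over `c` exactly when the fibre equation drops degree. -/
theorem ratAct_none_eq_some_iff {d : ℕ} (hd : 0 < d) (hdeg : max p.natDegree q.natDegree = d)
    (c : Kbar K) :
    ratAct p q (Kbar K) none = some c ↔ (fiberPoly p q c).coeff d = 0 := by
  have hco : (fiberPoly p q c).coeff d =
      algebraMap K _ (p.coeff d) - c * algebraMap K _ (q.coeff d) := by
    simp [fiberPoly]
  have hne : ∀ r : K[X], r.natDegree = d → r.coeff d ≠ 0 := fun r hr h => by
    have : r.leadingCoeff = 0 := by rw [leadingCoeff, hr, h]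
    rw [leadingCoeff_eq_zero] at this
    simp [this] at hr
    omega
  rw [hco]
  simp only [ratAct]
  split_ifs with h1 h2
  · have hp : p.natDegree = d := by omega
    rw [coeff_eq_zero_of_natDegree_lt (p := q) (by omega)]
    simpa using hne p hp
  · have hq : q.natDegree = d := by omega
    rw [coeff_eq_zero_of_natDegree_lt (p := p) (by omega)]
    have hq' : algebraMap K (Kbar K) (q.coeff d) ≠ 0 := by simpa using hne q hq
    rw [Option.some_inj, map_zero, zero_sub, neg_eq_zero, mul_eq_zero, or_iff_left hq', eq_comm]
  · have hp : p.natDegree = d := by omega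
    have hq : q.natDegree = d := by omega
    have hq' : algebraMap K (Kbar K) (q.coeff d) ≠ 0 := by simpa using hne q hq
    rw [leadingCoeff, leadingCoeff, hp, hq, Option.some_inj, map_div₀, div_eq_iff hq', sub_eq_zero]

theorem fiberPoly_ne_zero (hf : IsCoprime p q) {d : ℕ} (hd : 0 < d)
    (hdeg : max p.natDegree q.natDegree = d) (c : Kbar K) : fiberPoly p q c ≠ 0 := by
  intro h0
  -- If the equation vanished identically, every root of `q` would be a root of `p`.
  have hroot : ∀ x : Kbar K, aeval x q ≠ 0 := fun x hx => by
    have h := eval_fiberPoly (p := p) (q := q) c x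
    rw [h0, hx] at h
    exact no_common_root hf x hx (by simpa using h.symm)
  have hq : q.natDegree = 0 := by
    by_contra hq
    obtain ⟨x, hx⟩ := IsAlgClosed.exists_aeval_eq_zero (Kbar K) q
      (fun h => hq (natDegree_eq_of_degree_eq_some h))
    exact hroot x hx
  have hp : p.natDegree = d := by omega
  have h1 : (fiberPoly p q c).coeff d ≠ 0 := by
    have h2 : p.coeff d ≠ 0 := by
      rw [← hp, coeff_natDegree]
      intro h
      rw [leadingCoeff_eq_zero] at h
      simp [h] at hp
      omega
    simpa [fiberPoly, coeff_eq_zero_of_natDegree_lt (show q.natDegree < d by omega)] using h2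
  simp [h0] at h1

theorem ratAct_some_eq_none_iff (x : Kbar K) :
    ratAct p q (Kbar K) (some x) = none ↔ aeval x q = 0 := by
  simp [ratAct]

theorem ratAct_none_eq_none_iff :
    ratAct p q (Kbar K) none = none ↔ q.natDegree < p.natDegree := by
  simp only [ratAct]
  split_ifs <;> simp_all

/-- If the fibre polynomial has no root, it is constant, and then `∞` lies in the fibre. -/
theorem ratAct_surjective (hf : IsCoprime p q) {d : ℕ} (hd : 0 < d)
    (hdeg : max p.natDegree q.natDegree = d) : Function.Surjective (ratAct p q (Kbar K)) := by
  rintro (_ | c)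
  · by_cases hq : q.natDegree = 0
    · exact ⟨none, ratAct_none_eq_none_iff.2 (by omega)⟩
    · obtain ⟨x, hx⟩ := IsAlgClosed.exists_aeval_eq_zero (Kbar K) q
        (fun h => hq (natDegree_eq_of_degree_eq_some h))
      exact ⟨some x, (ratAct_some_eq_none_iff x).2 hx⟩
  · by_cases hr : (fiberPoly p q c).natDegree = 0
    · refine ⟨none, (ratAct_none_eq_some_iff hd hdeg c).2 ?_⟩
      exact coeff_eq_zero_of_natDegree_lt (by omega)
    · obtain ⟨x, hx⟩ := IsAlgClosed.exists_root (fiberPoly p q c)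
        (fun h => hr (natDegree_eq_of_degree_eq_some h))
      exact ⟨some x, (ratAct_some_eq_some_iff hf x c).2 hx⟩

/-- A fibre whose finite part consists of roots of `r` has at most `d` points, provided `r` has
degree at most `d`, and degree less than `d` when `∞` belongs to the fibre. -/
theorem fiber_card_aux {r : (Kbar K)[X]} (hr : r ≠ 0) {d : ℕ} (hrd : r.natDegree ≤ d)
    {S : Set (P1 (Kbar K))} (hS : ∀ x, some x ∈ S → r.eval x = 0)
    (hinf : none ∈ S → r.natDegree < d) : S.Finite ∧ S.ncard ≤ d := by
  have hroots : r.roots.toFinset.card ≤ r.natDegree :=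
    (Multiset.toFinset_card_le _).trans (card_roots' r)
  let T : Finset (P1 (Kbar K)) := r.roots.toFinset.image some
  have hT : T.card ≤ r.natDegree := Finset.card_image_le.trans hroots
  have hmem : ∀ x, some x ∈ S → some x ∈ T := fun x hx =>
    Finset.mem_image_of_mem _ (by simpa [hr] using hS x hx)
  by_cases hn : none ∈ S
  · have hsub : S ⊆ (insert none T : Finset (P1 (Kbar K))) := by
      rintro (_ | x) hx
      · simp
      · exact Finset.mem_insert_of_mem (hmem x hx)
    refine ⟨(Finset.finite_toSet _).subset hsub, ?_⟩
    have h1 := Set.ncard_le_ncard hsub (Finset.finite_toSet _)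
    rw [Set.ncard_coe_finset] at h1
    have h2 := Finset.card_insert_le none T
    have h3 := hinf hn
    omega
  · have hsub : S ⊆ (T : Set (P1 (Kbar K))) := by
      rintro (_ | x) hx
      · exact absurd hx hn
      · exact hmem x hx
    refine ⟨(Finset.finite_toSet _).subset hsub, ?_⟩
    have h1 := Set.ncard_le_ncard hsub (Finset.finite_toSet _)
    rw [Set.ncard_coe_finset] at h1
    omega

theorem ratAct_fiber_card (hf : IsCoprime p q) {d : ℕ} (hd : 0 < d)
    (hdeg : max p.natDegree q.natDegree = d) (y : P1 (Kbar K)) :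
    {x | ratAct p q (Kbar K) x = y}.Finite ∧ {x | ratAct p q (Kbar K) x = y}.ncard ≤ d := by
  cases y with
  | none =>
    have hq0 : q ≠ 0 := by
      rintro rfl
      have := natDegree_eq_zero_of_isUnit (isCoprime_zero_right.1 hf)
      simp [this] at hdeg
      omega
    refine fiber_card_aux (r := q.map (algebraMap K (Kbar K)))
      ((Polynomial.map_ne_zero_iff (algebraMap K (Kbar K)).injective).2 hq0) ?_
      (fun x hx => ?_) (fun h => ?_)
    · rw [natDegree_map]; omega
    · rw [eval_map_algebraMap]; exact (ratAct_some_eq_none_iff x).1 hx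
    · have := ratAct_none_eq_none_iff.1 h
      rw [natDegree_map]; omega
  | some c =>
    have hle := natDegree_fiberPoly_le (p := p) (q := q) c
    rw [hdeg] at hle
    refine fiber_card_aux (fiberPoly_ne_zero hf hd hdeg c) hle
      (fun x hx => (ratAct_some_eq_some_iff hf x c).1 hx) (fun h => ?_)
    refine lt_of_le_of_ne hle fun heq => ?_
    have h0 := (ratAct_none_eq_some_iff hd hdeg c).1 h
    rw [← heq, coeff_natDegree, leadingCoeff_eq_zero] at h0
    exact fiberPoly_ne_zero hf hd hdeg c h0

/-- The points of `ℙ¹` can be labelled by `Fin d` so that distinct points of a common fibre carry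
distinct labels. -/
theorem exists_label (hf : IsCoprime p q) {d : ℕ} (hd : 0 < d)
    (hdeg : max p.natDegree q.natDegree = d) :
    ∃ lab : P1 (Kbar K) → Fin d, ∀ x y,
      ratAct p q (Kbar K) x = ratAct p q (Kbar K) y → lab x = lab y → x = y := by
  have h : ∀ y, ∃ l : {x | ratAct p q (Kbar K) x = y} → Fin d, Function.Injective l := fun y => by
    obtain ⟨h1, h2⟩ := ratAct_fiber_card hf hd hdeg y
    have := h1.fintype
    obtain ⟨e⟩ := Function.Embedding.nonempty_of_card_le (β := Fin d)
      (α := {x | ratAct p q (Kbar K) x = y}) (by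
        rw [Fintype.card_fin, ← Nat.card_eq_fintype_card]; exact h2)
    exact ⟨e, e.injective⟩
  choose l hl using h
  refine ⟨fun x => l (ratAct p q (Kbar K) x) ⟨x, rfl⟩, fun x y hxy hlab => ?_⟩
  have key : ∀ z (hx : ratAct p q (Kbar K) x = z) (hy : ratAct p q (Kbar K) y = z),
      l z ⟨x, hx⟩ = l z ⟨y, hy⟩ → x = y := fun z hx hy h => congrArg Subtype.val (hl z h)
  refine key _ rfl hxy.symm (hlab.trans ?_)
  have hl' : ∀ z (h : ratAct p q (Kbar K) y = z), l _ ⟨y, rfl⟩ = l z ⟨y, h⟩ := by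
    rintro _ rfl
    rfl
  exact hl' _ hxy.symm

end RatAct

/-! ### Limits along every `m`-th term -/

theorem limsup_const_mul_subseq_le {u v : ℕ → ℝ} {c B : ℝ} {m : ℕ} (hm : 0 < m) (hc : 0 < c)
    (h0 : ∀ n, 0 ≤ u n) (hB : ∀ n, u n ≤ B) (hv : ∀ n, v n = c * u (m * n)) :
    Filter.limsup v Filter.atTop ≤ c * Filter.limsup u Filter.atTop := by
  have hbdd : Filter.IsBoundedUnder (· ≤ ·) Filter.atTop u := Filter.isBoundedUnder_of ⟨B, hB⟩
  have hcob : Filter.IsCoboundedUnder (· ≤ ·) Filter.atTop v :=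
    Filter.IsBoundedUnder.isCoboundedUnder_le
      (Filter.isBoundedUnder_of ⟨0, fun n => by rw [hv]; exact mul_nonneg hc.le (h0 _)⟩)
  have htm : Filter.Tendsto (fun n => m * n) Filter.atTop Filter.atTop :=
    Filter.tendsto_id.const_mul_atTop' hm
  refine le_of_forall_pos_le_add fun ε hε => ?_
  have hlt : Filter.limsup u Filter.atTop < Filter.limsup u Filter.atTop + ε / c := by
    have := div_pos hε hc
    linarith
  have hev := htm.eventually (Filter.eventually_lt_of_limsup_lt hlt hbdd)
  refine Filter.limsup_le_of_le hcob (hev.mono fun n hn => ?_)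
  rw [hv]
  calc c * u (m * n) ≤ c * (Filter.limsup u Filter.atTop + ε / c) := by gcongr
    _ = _ := by field_simp

theorem tendsto_const_mul_subseq {u v : ℕ → ℝ} {c B x : ℝ} {m : ℕ} (hm : 0 < m)
    (h0 : ∀ n, 0 ≤ u n) (hB : ∀ n, u n ≤ B) (hv : ∀ n, v n = c * u (m * n))
    (hinf : Filter.liminf u Filter.atTop = x) (hsup : Filter.limsup u Filter.atTop = x) :
    Filter.Tendsto v Filter.atTop (nhds (c * x)) := by
  have ht : Filter.Tendsto u Filter.atTop (nhds x) :=
    tendsto_of_liminf_eq_limsup hinf hsup (Filter.isBoundedUnder_of ⟨B, hB⟩)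
      (Filter.isBoundedUnder_of ⟨0, h0⟩)
  have htm : Filter.Tendsto (fun n => m * n) Filter.atTop Filter.atTop :=
    Filter.tendsto_id.const_mul_atTop' hm
  rw [show v = fun n => c * u (m * n) from funext hv]
  exact (ht.comp htm).const_mul c

/-- The bound `log |r_n| ≤ (d^0 + ⋯ + d^n) log d` is within a constant factor of `log (1/ε_n)`. -/
theorem log_div_le {d N n : ℕ} (hd : 2 ≤ d) (hN : N ≤ d ^ scaleExp d (n + 1)) :
    Real.log N / Real.log (1 / treeScale d n) ≤ (d + 1) * Real.log d / Real.log d.factorial := by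
  have h2 : (1 : ℝ) < d.factorial := by exact_mod_cast two_le_factorial hd
  have hlf : 0 < Real.log d.factorial := Real.log_pos h2
  have hd1 : (1 : ℝ) < d := by exact_mod_cast hd
  have hld : 0 < Real.log d := Real.log_pos hd1
  rw [log_inv_treeScale]
  rcases Nat.eq_zero_or_pos n with rfl | hn
  -- At `n = 0` the denominator is `log 1 = 0`, so the quotient is `0` by convention.
  · simp only [scaleExp, Finset.range_zero, Finset.sum_empty, Nat.cast_zero, zero_mul, div_zero]
    positivity
  have hpos : 1 ≤ scaleExp d n := (scaleExp_strictMono hd hn).nat_succ_le.trans' (by simp)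
  have hposR : (1 : ℝ) ≤ scaleExp d n := by exact_mod_cast hpos
  have hsucc : (scaleExp d (n + 1) : ℝ) = d * scaleExp d n + 1 := by
    simp only [scaleExp]
    push_cast
    exact geom_sum_succ
  have hlog : Real.log N ≤ scaleExp d (n + 1) * Real.log d := by
    rcases Nat.eq_zero_or_pos N with rfl | hN0
    · simp; positivity
    · rw [← Real.log_pow]
      exact Real.log_le_log (by exact_mod_cast hN0) (by exact_mod_cast hN)
  rw [div_le_div_iff₀ (by positivity) hlf]
  have : (scaleExp d (n + 1) : ℝ) ≤ (d + 1) * scaleExp d n := by rw [hsucc]; nlinarith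
  calc Real.log N * Real.log d.factorial
      ≤ ((d + 1) * scaleExp d n * Real.log d) * Real.log d.factorial := by
        gcongr
        exact hlog.trans (by gcongr)
    _ = _ := by ring

theorem arboreal_iterate_dim {K : Type*} [Field K] [NumberField K] {d : ℕ}
    (hd : 2 ≤ d) (p q : Polynomial K) (hf : IsCoprime p q)
    (hdeg : max p.natDegree q.natDegree = d) (α : P1 K) (m : ℕ) (hm : 2 ≤ m) :
    dimUpper (d ^ m) (arbGal (K := K) galP1 ⊥ ((ratAct p q (Kbar K))^[m]) (P1K α)) ≤
        (Cconst d / Cconst (d ^ m)) *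
          dimUpper d (arbGal (K := K) galP1 ⊥ (ratAct p q (Kbar K)) (P1K α)) ∧
      ∀ x : ℝ, HasDim d (arbGal (K := K) galP1 ⊥ (ratAct p q (Kbar K)) (P1K α)) x →
        HasDim (d ^ m) (arbGal (K := K) galP1 ⊥ ((ratAct p q (Kbar K))^[m]) (P1K α))
          (Cconst d / Cconst (d ^ m) * x) := by
  have hd0 : 0 < d := by omega
  have hD : 2 ≤ d ^ m := hd.trans (Nat.le_self_pow (by omega) d)
  have hsurj := ratAct_surjective hf hd0 hdeg
  have hφ := galP1_ratAct (p := p) (q := q)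
  have hα : ∀ g : Kbar K ≃ₐ[K] Kbar K, galP1 g (P1K α) = P1K α := fun g => by
    cases α <;> simp [galP1, P1K]
  have hinv : ∀ (g : Kbar K ≃ₐ[K] Kbar K) x, galP1 g⁻¹ (galP1 g x) = x := fun g x => by
    cases x with
    | none => rfl
    | some x => exact congrArg some (g.symm_apply_apply x)
  obtain ⟨lab, hlab⟩ := exists_label hf hd0 hdeg
  have hsub : ∀ φ : P1 (Kbar K) → P1 (Kbar K), Subsingleton (preV φ (P1K α) 0) := fun φ =>
    ⟨fun x y => Subtype.ext (x.2.trans y.2.symm)⟩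
  have hfin : ∀ k, Finite (preV (ratAct p q (Kbar K)) (P1K α) k) := fun k =>
    Finite.of_injective _ (preV_label_injective hlab _ k)
  have hfin' : ∀ k, Finite (preV (ratAct p q (Kbar K))^[m] (P1K α) k) := fun k => by
    have := hfin (m * k)
    simpa only [preV, Function.iterate_mul] using this
  have hsub1 := hsub (ratAct p q (Kbar K))
  have hsub2 := hsub (ratAct p q (Kbar K))^[m]
  set G := arbGal (K := K) galP1 ⊥ (ratAct p q (Kbar K)) (P1K α) with hG
  set G' := arbGal (K := K) galP1 ⊥ ((ratAct p q (Kbar K))^[m]) (P1K α) with hG'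
  let u : ℕ → ℝ := fun n => Real.log (coverNum d G n : ℝ) / Real.log (1 / treeScale d n)
  let v : ℕ → ℝ := fun n =>
    Real.log (coverNum (d ^ m) G' n : ℝ) / Real.log (1 / treeScale (d ^ m) n)
  have hc := Cconst_pos hd
  have hC := Cconst_pos hD
  have hcC : 0 < Cconst d / Cconst (d ^ m) := div_pos hc hC
  have hv : ∀ n, v n = Cconst d / Cconst (d ^ m) * u (m * n) := fun n => by
    have hN : coverNum (d ^ m) G' n = coverNum d G (m * n) := by
      rw [coverNum_eq_levelCard hD, coverNum_eq_levelCard hd]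
      exact levelCard_iterate hsurj hφ hα hinv m n
    simp only [u, v]
    rw [hN, log_inv_treeScale_eq hd, log_inv_treeScale_eq hD, pow_mul, Nat.cast_pow,
      div_mul_div_comm, mul_comm (Cconst d), mul_comm (Cconst (d ^ m)), mul_right_comm,
      mul_div_mul_right _ _ hc.ne']
  have h0 : ∀ n, 0 ≤ u n := fun n => by
    refine div_nonneg (Real.log_natCast_nonneg _) ?_
    rw [log_inv_treeScale]
    exact mul_nonneg (Nat.cast_nonneg _) (Real.log_natCast_nonneg _)
  have hB : ∀ n, u n ≤ (d + 1) * Real.log d / Real.log d.factorial := fun n => by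
    refine log_div_le hd ?_
    rw [coverNum_eq_levelCard hd]
    exact levelCard_le hφ hd hlab n
  have hm0 : 0 < m := by omega
  refine ⟨limsup_const_mul_subseq_le hm0 hcC h0 hB hv, fun x hx => ?_⟩
  have ht := tendsto_const_mul_subseq hm0 h0 hB hv hx.1 hx.2
  exact ⟨ht.liminf_eq, ht.limsup_eq⟩
end

section
/- Let K be a number field, let f : P^1 → P^1 be a rational map of degree d ≥ 2 defined over K, and let α ∈ P^1(K). If α is an f-periodic point, then dim_upper(G_{f,α}) < 1. More precisely, if m ≥ 1 is the minimal f-period of α (the least m ≥ 1 with f^m(α) = α), then dim_upper(G_{f,α}) ≤ 1 − d^{−m}. -/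
/-!
The point of the proof is self-similarity. If `α` has period `m`, then `α` is itself a vertex of
level `m` of its own preimage tree, and the subtree above that vertex consists of the same points
as the whole tree, shifted by `m` levels. Hence, once the action of a Galois element on the levels
`≤ n` is known, its action on the children of those level-`n` vertices that lie above the copy of
`α` at level `m` is known too (they are points of level `n + 1 - m ≤ n`). New freedom arises only
at the level-`n` vertices away from this copy, and there are at most `(d ^ m - 1) * d ^ (n - m)` of
them, because every point has at most `d` preimages; each contributes a factor of at most `d!`.

In group terms: let `H n` be the subgroup of the Galois group fixing every point of level `≤ n`.
It stabilises the fibre above each level-`n` vertex, and the resulting homomorphism to a product of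
symmetric groups over the vertices away from the copy of `α` has kernel contained in `H (n + 1)`.
This bounds the index of `H n` (`index_levelFixer_le`). The covering number is at most
that index (`coverNum_le_index`), and dividing logarithms yields the limit `1 - d ^ (-m)`.
-/

open scoped Classical

/-! ### Preimage trees with a group action -/

section GroupAction

variable {Γ P : Type*} [Group Γ] [MulAction Γ P] (φ : P → P) (α : P)

/-- The subgroup of `Γ` fixing all vertices of level at most `n` of the preimage tree of `α`. -/
def levelFixer (Γ : Type*) {P : Type*} [Group Γ] [MulAction Γ P] (φ : P → P) (α : P) (n : ℕ) :
    Subgroup Γ :=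
  fixingSubgroup Γ {x | ∃ k ≤ n, φ^[k] x = α}

lemma mem_levelFixer {n : ℕ} {g : Γ} :
    g ∈ levelFixer Γ φ α n ↔ ∀ k ≤ n, ∀ x, φ^[k] x = α → g • x = x := by
  rw [levelFixer, mem_fixingSubgroup_iff]
  constructor
  · intro h k hk x hx
    exact h x ⟨k, hk, hx⟩
  · rintro h x ⟨k, hk, hx⟩
    exact h k hk x hx

/-- The vertices of level `n` that are not above the copy of `α` sitting at level `m`. -/
def freeVertices (m n : ℕ) : Set P :=
  {x | φ^[n] x = α ∧ ¬ (m ≤ n ∧ φ^[n - m] x = α)}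

/-- Upper bound for the number of free vertices at level `n`. -/
def freeBound (d m n : ℕ) : ℕ := if m ≤ n then d ^ (n - m) * (d ^ m - 1) else d ^ n

variable {φ α} {d : ℕ}

lemma ncard_preimage_le (hfib : ∀ y, (φ ⁻¹' {y}).Finite ∧ (φ ⁻¹' {y}).ncard ≤ d)
    {t : Set P} (ht : t.Finite) :
    (φ ⁻¹' t).Finite ∧ (φ ⁻¹' t).ncard ≤ d * t.ncard := by
  have hfin : (φ ⁻¹' t).Finite := ht.preimage' fun b _ => (hfib b).1
  refine ⟨hfin, ?_⟩
  rw [Set.ncard_eq_toFinset_card _ hfin, Set.ncard_eq_toFinset_card _ ht]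
  refine Finset.card_le_mul_card_image_of_maps_to (f := φ) (by simp) d fun b hb => ?_
  refine le_trans ?_ (hfib b).2
  rw [Set.ncard_eq_toFinset_card _ (hfib b).1]
  exact Finset.card_le_card fun x hx => by simpa using (Finset.mem_filter.1 hx).2

lemma ncard_iterate_preimage_le (hfib : ∀ y, (φ ⁻¹' {y}).Finite ∧ (φ ⁻¹' {y}).ncard ≤ d)
    {t : Set P} (ht : t.Finite) (k : ℕ) :
    (φ^[k] ⁻¹' t).Finite ∧ (φ^[k] ⁻¹' t).ncard ≤ d ^ k * t.ncard := by
  induction k with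
  | zero => simpa using ht
  | succ k ih =>
    have h := ncard_preimage_le hfib ih.1
    rw [← Set.preimage_comp, ← Function.iterate_succ] at h
    refine ⟨h.1, h.2.trans ?_⟩
    rw [pow_succ', mul_assoc]
    exact Nat.mul_le_mul_left _ ih.2

lemma ncard_freeVertices_le (hfib : ∀ y, (φ ⁻¹' {y}).Finite ∧ (φ ⁻¹' {y}).ncard ≤ d)
    {m : ℕ} (hper : φ^[m] α = α) (n : ℕ) :
    (freeVertices φ α m n).Finite ∧ (freeVertices φ α m n).ncard ≤ freeBound d m n := by
  by_cases hmn : m ≤ n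
  · have hm := ncard_iterate_preimage_le hfib (Set.finite_singleton α) m
    have hcard : (φ^[m] ⁻¹' {α} \ {α}).ncard ≤ d ^ m - 1 := by
      rw [Set.ncard_sdiff_singleton_of_mem (by simpa using hper)]
      have := hm.2
      rw [Set.ncard_singleton] at this
      omega
    have h := ncard_iterate_preimage_le hfib (hm.1.sdiff (t := {α})) (n - m)
    have hsub : freeVertices φ α m n ⊆ φ^[n - m] ⁻¹' (φ^[m] ⁻¹' {α} \ {α}) := by
      rintro x ⟨hx, hx'⟩
      refine ⟨?_, fun h => hx' ⟨hmn, h⟩⟩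
      change φ^[m] (φ^[n - m] x) = α
      rw [← Function.iterate_add_apply, Nat.add_sub_cancel' hmn, hx]
    refine ⟨h.1.subset hsub, (Set.ncard_le_ncard hsub h.1).trans (h.2.trans ?_)⟩
    rw [freeBound, if_pos hmn]
    exact Nat.mul_le_mul_left _ hcard
  · have h := ncard_iterate_preimage_le hfib (Set.finite_singleton α) n
    have hsub : freeVertices φ α m n ⊆ φ^[n] ⁻¹' {α} := fun x hx => hx.1
    refine ⟨h.1.subset hsub, (Set.ncard_le_ncard hsub h.1).trans (h.2.trans ?_)⟩
    rw [freeBound, if_neg hmn, Set.ncard_singleton, mul_one]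

lemma iterate_smul (hφ : ∀ (g : Γ) x, φ (g • x) = g • φ x) (k : ℕ) (g : Γ) (x : P) :
    φ^[k] (g • x) = g • φ^[k] x := by
  induction k generalizing x with
  | zero => rfl
  | succ k ih => rw [Function.iterate_succ_apply, hφ, ih, Function.iterate_succ_apply]

/-- The action of `levelFixer Γ φ α n` on the fibres above the free vertices of level `n`. -/
def fibreHom (hφ : ∀ (g : Γ) x, φ (g • x) = g • φ x) (m n : ℕ) :
    levelFixer Γ φ α n →* ∀ v : freeVertices φ α m n, Equiv.Perm (φ ⁻¹' {(v : P)}) :=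
  MonoidHom.pi fun v => MonoidHom.toHomPerm
    { toFun := fun g x => ⟨(g : Γ) • (x : P), by
        have hx : φ (x : P) = v := x.2
        change φ ((g : Γ) • (x : P)) = v
        rw [hφ, hx]
        exact (mem_levelFixer φ α).1 g.2 n le_rfl v v.2.1⟩
      map_one' := by
        funext x
        exact Subtype.ext (one_smul Γ (x : P))
      map_mul' := fun g h => by
        funext x
        exact Subtype.ext (mul_smul (g : Γ) (h : Γ) (x : P)) }

lemma coe_fibreHom (hφ : ∀ (g : Γ) x, φ (g • x) = g • φ x) (m n : ℕ)
    (g : levelFixer Γ φ α n) (v : freeVertices φ α m n) (x : φ ⁻¹' {(v : P)}) :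
    ((fibreHom hφ m n g v x : φ ⁻¹' {(v : P)}) : P) = (g : Γ) • (x : P) := rfl

/-- The self-similarity step: an element trivial on the levels `≤ n` and on the fibres above the
free vertices of level `n` is trivial on level `n + 1`, since the remaining vertices of level
`n + 1` already occur at level `n + 1 - m`. -/
lemma ker_fibreHom_le (hφ : ∀ (g : Γ) x, φ (g • x) = g • φ x) {m : ℕ} (hm : 1 ≤ m) (n : ℕ) :
    (fibreHom (α := α) hφ m n).ker ≤
      (levelFixer Γ φ α (n + 1)).subgroupOf (levelFixer Γ φ α n) := by
  intro g hg
  rw [Subgroup.mem_subgroupOf, mem_levelFixer]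
  intro k hk x hx
  rcases Nat.lt_or_ge n k with hnk | hkn
  · obtain rfl : k = n + 1 := by omega
    rw [Function.iterate_succ_apply] at hx
    by_cases hfree : m ≤ n ∧ φ^[n - m] (φ x) = α
    · refine (mem_levelFixer φ α).1 g.2 (n - m + 1) (by omega) x ?_
      rw [Function.iterate_succ_apply]
      exact hfree.2
    · have h := congrFun (MonoidHom.mem_ker.1 hg) ⟨φ x, hx, hfree⟩
      have h' := congrArg Subtype.val (Equiv.congr_fun h ⟨x, rfl⟩)
      rwa [coe_fibreHom] at h'
  · exact (mem_levelFixer φ α).1 g.2 k hkn x hx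

lemma relIndex_levelFixer_le (hφ : ∀ (g : Γ) x, φ (g • x) = g • φ x)
    (hfib : ∀ y, (φ ⁻¹' {y}).Finite ∧ (φ ⁻¹' {y}).ncard ≤ d)
    {m : ℕ} (hm : 1 ≤ m) (hper : φ^[m] α = α) (n : ℕ) :
    (levelFixer Γ φ α (n + 1)).relIndex (levelFixer Γ φ α n) ≠ 0 ∧
    (levelFixer Γ φ α (n + 1)).relIndex (levelFixer Γ φ α n) ≤
      d.factorial ^ freeBound d m n := by
  obtain ⟨hS, hSc⟩ := ncard_freeVertices_le hfib hper n
  have : Finite (freeVertices φ α m n) := hS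
  have : Fintype (freeVertices φ α m n) := Fintype.ofFinite _
  have : ∀ v : freeVertices φ α m n, Finite (φ ⁻¹' {(v : P)}) := fun v => (hfib v).1
  have hcard : Nat.card (∀ v : freeVertices φ α m n, Equiv.Perm (φ ⁻¹' {(v : P)})) ≤
      d.factorial ^ freeBound d m n := by
    rw [Nat.card_pi]
    calc _ ≤ ∏ _v : freeVertices φ α m n, d.factorial := by
          refine Finset.prod_le_prod' fun v _ => ?_
          rw [Nat.card_perm, Nat.card_coe_set_eq]
          exact Nat.factorial_le (hfib v).2
      _ = d.factorial ^ (freeVertices φ α m n).ncard := by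
          rw [Finset.prod_const, Finset.card_univ, ← Nat.card_eq_fintype_card,
            Nat.card_coe_set_eq]
      _ ≤ _ := Nat.pow_le_pow_right d.factorial_pos hSc
  have hker : (fibreHom (Γ := Γ) (α := α) hφ m n).ker.index ≠ 0 := by
    rw [Subgroup.index_ker]
    exact Nat.card_pos.ne'
  have hle := ker_fibreHom_le (Γ := Γ) (α := α) hφ hm n
  refine ⟨fun h0 => hker ?_, ?_⟩
  · exact Nat.eq_zero_of_zero_dvd (h0 ▸ Subgroup.index_dvd_of_le hle)
  · refine (Nat.le_of_dvd (Nat.pos_of_ne_zero hker) (Subgroup.index_dvd_of_le hle)).trans ?_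
    rw [Subgroup.index_ker]
    exact (Nat.card_le_card_of_injective _ Subtype.val_injective).trans hcard

lemma index_levelFixer_le (hφ : ∀ (g : Γ) x, φ (g • x) = g • φ x) (hα : ∀ g : Γ, g • α = α)
    (hfib : ∀ y, (φ ⁻¹' {y}).Finite ∧ (φ ⁻¹' {y}).ncard ≤ d)
    {m : ℕ} (hm : 1 ≤ m) (hper : φ^[m] α = α) (n : ℕ) :
    (levelFixer Γ φ α n).index ≠ 0 ∧
    (levelFixer Γ φ α n).index ≤ d.factorial ^ ∑ k ∈ Finset.range n, freeBound d m k := by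
  induction n with
  | zero =>
    have : levelFixer Γ φ α 0 = ⊤ := by
      refine eq_top_iff.2 fun g _ => (mem_levelFixer φ α).2 fun k hk x hx => ?_
      obtain rfl : k = 0 := by omega
      obtain rfl : x = α := hx
      exact hα g
    simp [this]
  | succ n ih =>
    have hle : levelFixer Γ φ α (n + 1) ≤ levelFixer Γ φ α n := fun g hg =>
      (mem_levelFixer φ α).2 fun k hk => (mem_levelFixer φ α).1 hg k (by omega)
    have h := relIndex_levelFixer_le (Γ := Γ) (α := α) hφ hfib hm hper n
    rw [← Subgroup.relIndex_mul_index hle]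
    refine ⟨mul_ne_zero h.1 ih.1, (Nat.mul_le_mul h.2 ih.2).trans ?_⟩
    rw [Finset.sum_range_succ, pow_add, mul_comm]

/-- The automorphism of the preimage tree induced by a group element. -/
def treeAut (hφ : ∀ (g : Γ) x, φ (g • x) = g • φ x) (hα : ∀ g : Γ, g • α = α) (g : Γ) :
    ∀ n, Equiv.Perm (preV φ α n) := fun n =>
  { toFun := fun x => ⟨g • (x : P), by rw [iterate_smul hφ, x.2, hα]⟩
    invFun := fun x => ⟨g⁻¹ • (x : P), by rw [iterate_smul hφ, x.2, hα]⟩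
    left_inv := fun x => Subtype.ext (inv_smul_smul g (x : P))
    right_inv := fun x => Subtype.ext (smul_inv_smul g (x : P)) }

lemma treeDist_le {V : ℕ → Type*} (d n : ℕ) {σ τ : ∀ k, Equiv.Perm (V k)}
    (h : AgreeUpTo n σ τ) : treeDist d σ τ ≤ treeScale d n := by
  refine csInf_le ⟨0, ?_⟩ ⟨n, h, rfl⟩
  rintro x ⟨k, -, rfl⟩
  unfold treeScale
  positivity

lemma coverNum_le_index (hφ : ∀ (g : Γ) x, φ (g • x) = g • φ x) (hα : ∀ g : Γ, g • α = α)
    (d n : ℕ) (hn : (levelFixer Γ φ α n).index ≠ 0) (G : Set (∀ k, Equiv.Perm (preV φ α k)))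
    (hG : ∀ σ ∈ G, ∃ g : Γ, ∀ (k : ℕ) (x : preV φ α k), (σ k x : P) = g • (x : P)) :
    coverNum d G n ≤ (levelFixer Γ φ α n).index := by
  have : (levelFixer Γ φ α n).FiniteIndex := ⟨hn⟩
  have : Fintype (Γ ⧸ levelFixer Γ φ α n) := Fintype.ofFinite _
  let s : Finset (∀ k, Equiv.Perm (preV φ α k)) :=
    Finset.univ.image fun c : Γ ⧸ levelFixer Γ φ α n => treeAut hφ hα c.out
  have hs : s.card ≤ (levelFixer Γ φ α n).index := by
    refine Finset.card_image_le.trans ?_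
    rw [Finset.card_univ, ← Nat.card_eq_fintype_card, Subgroup.index]
  refine le_trans ?_ hs
  unfold coverNum
  refine Nat.sInf_le ⟨s, rfl, fun σ hσ => ?_⟩
  obtain ⟨g, hg⟩ := hG σ hσ
  refine Set.mem_iUnion₂.2 ⟨treeAut hφ hα (g : Γ ⧸ levelFixer Γ φ α n).out,
    Finset.mem_image_of_mem _ (Finset.mem_univ _), treeDist_le d n fun k hk => ?_⟩
  ext x
  have hmem : ((g : Γ ⧸ levelFixer Γ φ α n).out)⁻¹ * g ∈ levelFixer Γ φ α n :=
    QuotientGroup.eq.1 (QuotientGroup.out_eq' _)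
  have hx := (mem_levelFixer φ α).1 hmem k hk x x.2
  rw [mul_smul, inv_smul_eq_iff] at hx
  rw [hg]
  exact hx.symm

end GroupAction

/-! ### From index bounds to the Minkowski dimension -/

/-- The first `m` levels contribute an error bounded independently of `n`. -/
lemma sum_freeBound_le {d : ℕ} (hd : 2 ≤ d) (m n : ℕ) :
    ((∑ k ∈ Finset.range n, freeBound d m k : ℕ) : ℝ) ≤
      (1 - ((d : ℝ) ^ m)⁻¹) * scaleExp d n + scaleExp d m := by
  have hd0 : (0 : ℝ) < d := by positivity
  have hterm : ∀ k, (freeBound d m k : ℝ) ≤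
      (1 - ((d : ℝ) ^ m)⁻¹) * d ^ k + if k < m then (d : ℝ) ^ k else 0 := by
    intro k
    unfold freeBound
    split_ifs with h1 h2 h2
    · omega
    · obtain ⟨j, rfl⟩ := Nat.exists_eq_add_of_le h1
      rw [Nat.add_sub_cancel_left, Nat.cast_mul,
        Nat.cast_sub (Nat.one_le_pow _ _ (by omega))]
      push_cast
      rw [pow_add]
      field_simp
      linarith
    · push_cast
      have : ((d : ℝ) ^ m)⁻¹ ≤ 1 :=
        inv_le_one_of_one_le₀ (one_le_pow₀ (by exact_mod_cast (by omega : 1 ≤ d)))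
      have : 0 ≤ (1 - ((d : ℝ) ^ m)⁻¹) * d ^ k := mul_nonneg (by linarith) (by positivity)
      linarith
    · omega
  have htail : ∑ k ∈ Finset.range n, (if k < m then (d : ℝ) ^ k else 0) ≤ scaleExp d m := by
    rw [← Finset.sum_filter, scaleExp]
    push_cast
    exact Finset.sum_le_sum_of_subset_of_nonneg (fun k hk => by simp at hk ⊢; exact hk.2)
      fun _ _ _ => by positivity
  calc ((∑ k ∈ Finset.range n, freeBound d m k : ℕ) : ℝ)
      ≤ ∑ k ∈ Finset.range n,
          ((1 - ((d : ℝ) ^ m)⁻¹) * d ^ k + if k < m then (d : ℝ) ^ k else 0) := by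
        push_cast
        exact Finset.sum_le_sum fun k _ => hterm k
    _ = (1 - ((d : ℝ) ^ m)⁻¹) * scaleExp d n +
          ∑ k ∈ Finset.range n, (if k < m then (d : ℝ) ^ k else 0) := by
        rw [Finset.sum_add_distrib, ← Finset.mul_sum, scaleExp]
        push_cast
        rfl
    _ ≤ _ := by linarith

lemma self_le_scaleExp {d : ℕ} (hd : 2 ≤ d) (n : ℕ) : n ≤ scaleExp d n := by
  calc n = ∑ _k ∈ Finset.range n, 1 := by simp
    _ ≤ scaleExp d n := Finset.sum_le_sum fun k _ => Nat.one_le_pow _ _ (by omega)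

lemma dimUpper_le_of_coverNum_le {V : ℕ → Type*} {d : ℕ} (hd : 2 ≤ d) (m : ℕ)
    (G : Set (∀ k, Equiv.Perm (V k)))
    (h : ∀ n, coverNum d G n ≤ d.factorial ^ ∑ k ∈ Finset.range n, freeBound d m k) :
    dimUpper d G ≤ 1 - ((d : ℝ) ^ m)⁻¹ := by
  have hlog : 0 < Real.log (d.factorial : ℝ) := by
    refine Real.log_pos ?_
    exact_mod_cast lt_of_lt_of_le (by omega) (Nat.self_le_factorial d)
  have hscale : ∀ n, Real.log (1 / treeScale d n) =
      scaleExp d n * Real.log (d.factorial : ℝ) := by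
    intro n
    rw [treeScale, one_div, inv_inv, Real.log_pow]
  have hlim : Filter.Tendsto
      (fun n => (1 - ((d : ℝ) ^ m)⁻¹) + (scaleExp d m : ℝ) / (scaleExp d n : ℝ))
      Filter.atTop (nhds (1 - ((d : ℝ) ^ m)⁻¹)) := by
    have h1 : Filter.Tendsto (fun n => (scaleExp d n : ℝ)) Filter.atTop Filter.atTop :=
      Filter.tendsto_atTop_mono (fun n => by exact_mod_cast self_le_scaleExp hd n)
        tendsto_natCast_atTop_atTop
    simpa using (h1.const_div_atTop (scaleExp d m : ℝ)).const_add (1 - ((d : ℝ) ^ m)⁻¹)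
  have hnonneg : ∀ n, 0 ≤ Real.log (coverNum d G n : ℝ) / Real.log (1 / treeScale d n) := by
    intro n
    rw [hscale]
    exact div_nonneg (Real.log_natCast_nonneg _) (by positivity)
  rw [dimUpper, ← hlim.limsup_eq]
  refine Filter.limsup_le_limsup ?_ ?_ hlim.isBoundedUnder_le
  · filter_upwards [Filter.eventually_ge_atTop 1] with n hn
    have he : (0 : ℝ) < scaleExp d n := by
      exact_mod_cast lt_of_lt_of_le hn (self_le_scaleExp hd n)
    have hnum : Real.log (coverNum d G n : ℝ) ≤
        ((1 - ((d : ℝ) ^ m)⁻¹) * scaleExp d n + scaleExp d m) *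
          Real.log (d.factorial : ℝ) := by
      refine le_trans ?_ (mul_le_mul_of_nonneg_right (sum_freeBound_le hd m n) hlog.le)
      rw [← Real.log_pow]
      rcases Nat.eq_zero_or_pos (coverNum d G n) with h0 | h0
      · rw [h0, Nat.cast_zero, Real.log_zero]
        exact_mod_cast Real.log_natCast_nonneg
          (d.factorial ^ ∑ k ∈ Finset.range n, freeBound d m k)
      · exact Real.log_le_log (by exact_mod_cast h0) (by exact_mod_cast h n)
    rw [hscale, div_le_iff₀ (by positivity)]
    refine hnum.trans (le_of_eq ?_)
    field_simp
  · exact Filter.isCoboundedUnder_le_of_le Filter.atTop hnonneg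

/-! ### Rational maps on the projective line -/

section RationalMap

variable {K : Type*} [Field K] {p q : Polynomial K} {d : ℕ}

lemma ncard_le_of_isRoot {A : Type*} [Field A] {r : Polynomial A} (hr : r ≠ 0) {s : Set (P1 A)}
    (hs : ∀ x, some x ∈ s → r.IsRoot x) (hdeg : r.natDegree ≤ d)
    (hinf : none ∈ s → r.natDegree < d) : s.Finite ∧ s.ncard ≤ d := by
  let t : Finset (P1 A) := r.roots.toFinset.image some
  have ht : t.card ≤ r.natDegree :=
    Finset.card_image_le.trans ((Multiset.toFinset_card_le _).trans r.card_roots')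
  by_cases h : none ∈ s
  · have hsub : s ⊆ (insert none t : Finset (P1 A)) := by
      rintro (_ | x) hx
      · simp
      · simpa [t, hr] using hs x hx
    refine ⟨(Finset.finite_toSet _).subset hsub, ?_⟩
    refine (Set.ncard_le_ncard hsub (Finset.finite_toSet _)).trans ?_
    rw [Set.ncard_coe_finset]
    have := hinf h
    exact (Finset.card_insert_le _ _).trans (by omega)
  · have hsub : s ⊆ t := by
      rintro (_ | x) hx
      · exact absurd hx h
      · simpa [t, hr] using hs x hx
    refine ⟨(Finset.finite_toSet _).subset hsub, ?_⟩
    refine (Set.ncard_le_ncard hsub (Finset.finite_toSet _)).trans ?_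
    rw [Set.ncard_coe_finset]
    omega

/-- A rational map of degree `d` has at most `d` preimages of every point: the preimages of a
finite `c` are the roots of `p - c q`, together with `∞` exactly when the degree of `p - c q` drops
below `d`. -/
lemma ncard_ratAct_preimage_le (hd : 2 ≤ d) (hf : IsCoprime p q)
    (hdeg : max p.natDegree q.natDegree = d) (A : Type*) [Field A] [Algebra K A] (y : P1 A) :
    (ratAct p q A ⁻¹' {y}).Finite ∧ (ratAct p q A ⁻¹' {y}).ncard ≤ d := by
  have hpd : p.natDegree ≤ d := hdeg ▸ le_max_left _ _
  have hqd : q.natDegree ≤ d := hdeg ▸ le_max_right _ _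
  have hq0 : q ≠ 0 := by
    rintro rfl
    have := Polynomial.natDegree_eq_zero_of_isUnit (isCoprime_zero_right.1 hf)
    simp at hdeg
    omega
  rcases y with _ | c
  · refine ncard_le_of_isRoot (r := q.map (algebraMap K A)) (Polynomial.map_ne_zero hq0) ?_
      (by rwa [Polynomial.natDegree_map]) ?_
    · intro x hx
      by_contra h
      rw [Polynomial.IsRoot, Polynomial.eval_map_algebraMap] at h
      simp [ratAct, h] at hx
    · intro hx
      rw [Polynomial.natDegree_map]
      by_contra h
      have h1 : ¬ q.natDegree < p.natDegree := by omega
      simp only [ratAct, h1, Set.mem_preimage, Set.mem_singleton_iff, if_false] at hx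
      split_ifs at hx
  · set r := p.map (algebraMap K A) - Polynomial.C c * q.map (algebraMap K A) with hr
    have hcop : IsCoprime (p.map (algebraMap K A)) (q.map (algebraMap K A)) :=
      hf.map (Polynomial.mapRingHom (algebraMap K A))
    have hr0 : r ≠ 0 := by
      intro h
      have hpq : p.map (algebraMap K A) = Polynomial.C c * q.map (algebraMap K A) :=
        sub_eq_zero.1 h
      have hu : IsUnit (q.map (algebraMap K A)) :=
        hcop.symm.isUnit_of_dvd (hpq ▸ dvd_mul_left _ _)
      have h1 := Polynomial.natDegree_eq_zero_of_isUnit hu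
      have h2 := Polynomial.natDegree_C_mul_le c (q.map (algebraMap K A))
      rw [← hpq, h1, Polynomial.natDegree_map] at h2
      rw [Polynomial.natDegree_map] at h1
      rw [h1] at hdeg
      omega
    have hrd : r.natDegree ≤ d := by
      refine (Polynomial.natDegree_sub_le _ _).trans (max_le ?_ ?_)
      · rwa [Polynomial.natDegree_map]
      · refine (Polynomial.natDegree_C_mul_le _ _).trans ?_
        rwa [Polynomial.natDegree_map]
    refine ncard_le_of_isRoot hr0 ?_ hrd ?_
    · intro x hx
      by_cases h : Polynomial.aeval x q = 0
      · simp [ratAct, h] at hx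
      · simp only [ratAct, h, if_false, Set.mem_preimage, Set.mem_singleton_iff,
          Option.some.injEq] at hx
        rw [div_eq_iff h] at hx
        simp [hr, Polynomial.IsRoot, Polynomial.eval_map_algebraMap, hx]
    · intro hx
      have hcoeff : r.coeff d = 0 := by
        rw [hr, Polynomial.coeff_sub, Polynomial.coeff_C_mul, Polynomial.coeff_map,
          Polynomial.coeff_map]
        by_cases h1 : q.natDegree < p.natDegree
        · simp [ratAct, h1] at hx
        by_cases h2 : p.natDegree < q.natDegree
        · simp only [ratAct, h1, h2, if_false, if_true, Set.mem_preimage,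
            Set.mem_singleton_iff, Option.some.injEq] at hx
          rw [← hx, Polynomial.coeff_eq_zero_of_natDegree_lt (by omega : p.natDegree < d)]
          simp
        · simp only [ratAct, h1, h2, if_false, Set.mem_preimage,
            Set.mem_singleton_iff, Option.some.injEq] at hx
          have e1 : p.natDegree = d := by omega
          have e2 : q.natDegree = d := by omega
          have hlc : q.coeff d ≠ 0 := by
            rw [← e2]
            exact Polynomial.leadingCoeff_ne_zero.2 hq0
          rw [← hx, Polynomial.leadingCoeff, Polynomial.leadingCoeff, e1, e2, ← map_mul,
            div_mul_cancel₀ _ hlc, sub_self]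
      refine lt_of_le_of_ne hrd fun h => hr0 ?_
      rw [← Polynomial.leadingCoeff_eq_zero, Polynomial.leadingCoeff, h, hcoeff]

lemma galP1_eq_smul (σ : Kbar K ≃ₐ[K] Kbar K) (x : P1 (Kbar K)) : galP1 σ x = σ • x := rfl

lemma ratAct_smul (σ : Kbar K ≃ₐ[K] Kbar K) (x : P1 (Kbar K)) :
    ratAct p q (Kbar K) (σ • x) = σ • ratAct p q (Kbar K) x := by
  simp only [← galP1_eq_smul]
  rcases x with _ | x
  · simp only [galP1, Option.map_none, ratAct]
    split_ifs <;> simp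
  · simp only [galP1, Option.map_some, ratAct]
    have key : ∀ s : Polynomial K,
        Polynomial.aeval (σ x) s = σ (Polynomial.aeval x s) := fun s =>
      Polynomial.aeval_algHom_apply σ.toAlgHom x s
    by_cases h : Polynomial.aeval x q = 0
    · simp [key, h]
    · simp [key, h]

lemma smul_P1K (σ : Kbar K ≃ₐ[K] Kbar K) (α : P1 K) : σ • P1K α = P1K α := by
  rw [← galP1_eq_smul]
  cases α <;> simp [galP1, P1K]

end RationalMap

theorem arboreal_periodic_not_large {K : Type*} [Field K] [NumberField K] {d : ℕ}
    (hd : 2 ≤ d) (p q : Polynomial K) (hf : IsCoprime p q)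
    (hdeg : max p.natDegree q.natDegree = d) (α : P1 K) (m : ℕ) (hm : 1 ≤ m)
    (hper : (ratAct p q (Kbar K))^[m] (P1K α) = P1K α)
    (hmin : ∀ k, 0 < k → k < m → (ratAct p q (Kbar K))^[k] (P1K α) ≠ P1K α) :
    dimUpper d (arbGal (K := K) galP1 ⊥ (ratAct p q (Kbar K)) (P1K α)) ≤
        1 - ((d : ℝ) ^ m)⁻¹ ∧
      dimUpper d (arbGal (K := K) galP1 ⊥ (ratAct p q (Kbar K)) (P1K α)) < 1 := by
  have hdim : dimUpper d (arbGal (K := K) galP1 ⊥ (ratAct p q (Kbar K)) (P1K α)) ≤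
      1 - ((d : ℝ) ^ m)⁻¹ := by
    refine dimUpper_le_of_coverNum_le hd m _ fun n => ?_
    have hidx := index_levelFixer_le (Γ := Kbar K ≃ₐ[K] Kbar K) (ratAct_smul (p := p) (q := q))
      (smul_P1K · α) (ncard_ratAct_preimage_le hd hf hdeg (Kbar K)) hm hper n
    refine (coverNum_le_index (Γ := Kbar K ≃ₐ[K] Kbar K) ratAct_smul (smul_P1K · α) d n
      hidx.1 _ ?_).trans hidx.2
    rintro g ⟨σ, -, hσ⟩
    exact ⟨σ, hσ⟩
  refine ⟨hdim, hdim.trans_lt ?_⟩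
  have : (0 : ℝ) < ((d : ℝ) ^ m)⁻¹ := by positivity
  linarith
end
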